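/- Stochastic interaction is nonnegative and equals the divergence of the parent-free model. S ≥ 0, and moreover S = D(G_∅), where G_∅ is the parent assignment with π(i) = ∅ for every i (so that the factorized model conditional is ∏_{i=1}^M P(Y'^i = y_i | W^i = w_i)). -/

import Mathlib

/-!
The law of the pair `(Y', W)` is summed over the finite product space. Marginalizing
(`sum_fiber`) writes each `H(Y'^i | W^i)` as a sum over joint states `(y, w)`, so that `S` becomes
the sum of `P(y, w) * (log P(y | w) - ∑ i, log P(y_i | w_i))`; on the support every factor is
positive, and the logarithms combine into the integrand of `D(G_∅)`.

Nonnegativity is Gibbs' inequality: `log t ≥ 1 - 1 / t` bounds each term of the divergence below by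
`P(y, w) - P(w) * ∏ i, P(y_i | w_i)`. The sum over `(y, w)` of the first part is `∑ w, P(w)`, and
that of the second is at most this, because each `P(· | w_i)` has total mass at most one
(it is zero when `P(w_i) = 0`).
-/

open MeasureTheory Finset

/-- Conditional probability `P(X = x | Y = y)` computed from a measure. -/
noncomputable def cpr {Ω α β : Type*} [MeasurableSpace Ω] (μ : Measure Ω)
    (X : Ω → α) (Y : Ω → β) (x : α) (y : β) : ℝ :=
  (μ {ω | X ω = x ∧ Y ω = y}).toReal / (μ {ω | Y ω = y}).toReal

/-- Conditional entropy `H(X | Y) = -∑ P(X=x, Y=y) log P(X=x | Y=y)`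
(with the `0 · log 0 = 0` convention, automatic here since the coefficient vanishes). -/
noncomputable def condEnt {Ω α β : Type*} [MeasurableSpace Ω] (μ : Measure Ω)
    [Fintype α] [Fintype β] (X : Ω → α) (Y : Ω → β) : ℝ :=
  -∑ x : α, ∑ y : β, (μ {ω | X ω = x ∧ Y ω = y}).toReal * Real.log (cpr μ X Y x y)

/-- Collective transfer entropy into node `i` for the parent assignment `G`:
`T_i(G) = H(Y'^i | W^i) − H(Y'^i | (W^i, P_i))` where `P_i = (W^j)_{j ∈ G i}`. -/
noncomputable def transEnt {Ω : Type*} [MeasurableSpace Ω] (μ : Measure Ω) {M : ℕ}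
    {Yt Wt : Fin M → Type*} [∀ i, Fintype (Yt i)] [∀ i, Fintype (Wt i)]
    (Yv : ∀ i, Ω → Yt i) (Wv : ∀ i, Ω → Wt i)
    (G : Fin M → Finset (Fin M)) (i : Fin M) : ℝ :=
  condEnt μ (Yv i) (Wv i) -
    condEnt μ (Yv i) (fun ω => (Wv i ω, fun j : {j // j ∈ G i} => Wv j.1 ω))

/-- Stochastic interaction `S = −H(Y' | W) + ∑ i, H(Y'^i | W^i)`. -/
noncomputable def stochInt {Ω : Type*} [MeasurableSpace Ω] (μ : Measure Ω) {M : ℕ}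
    {Yt Wt : Fin M → Type*} [∀ i, Fintype (Yt i)] [∀ i, Fintype (Wt i)]
    (Yv : ∀ i, Ω → Yt i) (Wv : ∀ i, Ω → Wt i) : ℝ :=
  -condEnt μ (fun ω (i : Fin M) => Yv i ω) (fun ω (i : Fin M) => Wv i ω) +
    ∑ i, condEnt μ (Yv i) (Wv i)

/-- Conditional KL divergence of the factorized model determined by `G` from the
observed joint distribution:
`D(G) = ∑_{y,w} P(Y'=y, W=w) · log [ P(Y'=y | W=w) / ∏ i, P(Y'^i=y_i | W^i=w_i, P_i=p_i(w)) ]`.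
(Terms with `P(Y'=y, W=w) = 0` vanish, so the sum effectively ranges over the support.) -/
noncomputable def condKL {Ω : Type*} [MeasurableSpace Ω] (μ : Measure Ω) {M : ℕ}
    {Yt Wt : Fin M → Type*} [∀ i, Fintype (Yt i)] [∀ i, Fintype (Wt i)]
    (Yv : ∀ i, Ω → Yt i) (Wv : ∀ i, Ω → Wt i)
    (G : Fin M → Finset (Fin M)) : ℝ :=
  ∑ y : ∀ i, Yt i, ∑ w : ∀ i, Wt i,
    (μ {ω | (fun i => Yv i ω) = y ∧ (fun i => Wv i ω) = w}).toReal *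
      Real.log (cpr μ (fun ω (i : Fin M) => Yv i ω) (fun ω (i : Fin M) => Wv i ω) y w /
        ∏ i, cpr μ (Yv i) (fun ω => (Wv i ω, fun j : {j // j ∈ G i} => Wv j.1 ω))
          (y i) (w i, fun j : {j // j ∈ G i} => w j.1))

/-- Marginalization: an expectation of a function of `g ∘ Z` can be computed from the law of `Z`. -/
lemma sum_fiber {Ω γ δ : Type*} [MeasurableSpace Ω] (μ : Measure Ω) [IsFiniteMeasure μ]
    [Fintype γ] [Fintype δ] (Z : Ω → γ) (hZ : ∀ c, MeasurableSet {ω | Z ω = c})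
    (g : γ → δ) (F : δ → ℝ) :
    ∑ d, (μ {ω | g (Z ω) = d}).toReal * F d = ∑ c, (μ {ω | Z ω = c}).toReal * F (g c) := by
  classical
  have h : ∀ d, (μ {ω | g (Z ω) = d}).toReal
      = ∑ c with g c = d, (μ {ω | Z ω = c}).toReal := by
    intro d
    have hset : {ω | g (Z ω) = d} = ⋃ c ∈ univ.filter (fun c => g c = d), {ω | Z ω = c} := by
      ext ω; simp
    rw [hset, measure_biUnion_finset _ (fun c _ => hZ c),
      ENNReal.toReal_sum (fun c _ => measure_ne_top _ _)]
    intro a _ b _ hab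
    refine Set.disjoint_left.2 fun ω ha hb => hab ?_
    exact (show Z ω = a from ha).symm.trans hb
  simp_rw [h, sum_mul]
  rw [← Finset.sum_fiberwise univ g]
  refine sum_congr rfl fun d _ => sum_congr rfl fun c hc => ?_
  rw [(mem_filter.1 hc).2]

lemma cpr_nonneg {Ω α β : Type*} [MeasurableSpace Ω] (μ : Measure Ω)
    (X : Ω → α) (Y : Ω → β) (x : α) (y : β) : 0 ≤ cpr μ X Y x y :=
  div_nonneg ENNReal.toReal_nonneg ENNReal.toReal_nonneg

/-- A conditional law has mass at most one; the mass is zero, not one, on a null condition. -/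
lemma sum_cpr_le_one {Ω α β : Type*} [MeasurableSpace Ω] (μ : Measure Ω) [IsFiniteMeasure μ]
    [Fintype α] (X : Ω → α) (Y : Ω → β) (hX : ∀ a, MeasurableSet {ω | X ω = a})
    (hY : ∀ b, MeasurableSet {ω | Y ω = b}) (y : β) : ∑ x, cpr μ X Y x y ≤ 1 := by
  have h : ∑ x, (μ {ω | X ω = x ∧ Y ω = y}).toReal = (μ {ω | Y ω = y}).toReal := by
    rw [← ENNReal.toReal_sum (fun c _ => measure_ne_top _ _), ← measure_biUnion_finset]
    · congr 2
      ext ω; simp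
    · intro a _ b _ hab
      refine Set.disjoint_left.2 fun ω ha hb => hab ?_
      exact (show X ω = a ∧ _ from ha).1.symm.trans (show X ω = b ∧ _ from hb).1
    · exact fun a _ => (hX a).inter (hY y)
  simp only [cpr]
  rw [← sum_div, h]
  exact div_self_le_one _

/-- An event with positive probability forces positive conditional probabilities of the events
containing it. -/
lemma cpr_pos {Ω α β : Type*} [MeasurableSpace Ω] (μ : Measure Ω) [IsFiniteMeasure μ]
    (X : Ω → α) (Y : Ω → β) (x : α) (y : β) {s : Set Ω} (hs : 0 < (μ s).toReal)
    (hsub : s ⊆ {ω | X ω = x ∧ Y ω = y}) : 0 < cpr μ X Y x y := by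
  have key : ∀ t, s ⊆ t → 0 < (μ t).toReal := fun t ht =>
    hs.trans_le (ENNReal.toReal_mono (measure_ne_top _ _) (measure_mono ht))
  exact div_pos (key _ hsub) (key _ (hsub.trans fun ω h => h.2))

/-- The term-by-term form of Gibbs' inequality. With `p = P(y, w)` and `q = P(w)`, the ratio `p / q`
is the conditional probability `P(y | w)`, and `r` is the product of the model factors. -/
lemma gibbs_term {p q r : ℝ} (hp : 0 ≤ p) (hq : 0 ≤ q) (hr : 0 ≤ r) (hpq : 0 < p → 0 < q)
    (hpr : 0 < p → 0 < r) : p - q * r ≤ p * Real.log (p / q / r) := by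
  rcases hp.eq_or_lt with rfl | hp
  · simpa using mul_nonneg hq hr
  have hq' := hpq hp
  have hr' := hpr hp
  have h := mul_le_mul_of_nonneg_left
    (Real.one_sub_inv_le_log_of_pos (x := p / q / r) (by positivity)) hp.le
  have e : p * (1 - (p / q / r)⁻¹) = p - q * r := by field_simp
  linarith

/-- **Stochastic interaction is nonnegative and equals the divergence of the parent-free
model**: `S ≥ 0` and `S = D(G_∅)` where `G_∅` assigns the empty parent set to every node. -/
theorem stochInt_nonneg_and_eq_condKL_empty {Ω : Type*} [MeasurableSpace Ω] (μ : Measure Ω) [IsProbabilityMeasure μ]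
    {M : ℕ} (hM : 1 ≤ M)
    (Yt Wt : Fin M → Type*)
    [∀ i, Fintype (Yt i)] [∀ i, Nonempty (Yt i)]
    [∀ i, Fintype (Wt i)] [∀ i, Nonempty (Wt i)]
    (Yv : ∀ i, Ω → Yt i) (Wv : ∀ i, Ω → Wt i)
    (hYm : ∀ i (a : Yt i), MeasurableSet {ω | Yv i ω = a})
    (hWm : ∀ i (b : Wt i), MeasurableSet {ω | Wv i ω = b}) :
    0 ≤ stochInt μ Yv Wv ∧
      stochInt μ Yv Wv = condKL μ Yv Wv (fun _ => (∅ : Finset (Fin M))) := by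
  classical
  set Y : Ω → ∀ i, Yt i := fun ω i => Yv i ω with hYdef
  set W : Ω → ∀ i, Wt i := fun ω i => Wv i ω with hWdef
  have hY : ∀ y, MeasurableSet {ω | Y ω = y} := fun y => by
    have : {ω | Y ω = y} = ⋂ i, {ω | Yv i ω = y i} := by ext ω; simp [hYdef, funext_iff]
    rw [this]; exact MeasurableSet.iInter fun i => hYm i _
  have hW : ∀ w, MeasurableSet {ω | W ω = w} := fun w => by
    have : {ω | W ω = w} = ⋂ i, {ω | Wv i ω = w i} := by ext ω; simp [hWdef, funext_iff]
    rw [this]; exact MeasurableSet.iInter fun i => hWm i _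
  have hZ : ∀ c : (∀ i, Yt i) × (∀ i, Wt i), MeasurableSet {ω | (Y ω, W ω) = c} := fun c => by
    have : {ω | (Y ω, W ω) = c} = {ω | Y ω = c.1} ∩ {ω | W ω = c.2} := by
      ext ω; simp [Prod.ext_iff]
    rw [this]; exact (hY _).inter (hW _)
  set p : (∀ i, Yt i) → (∀ i, Wt i) → ℝ :=
    fun y w => (μ {ω | Y ω = y ∧ W ω = w}).toReal with hp
  set r : (∀ i, Yt i) → (∀ i, Wt i) → ℝ :=
    fun y w => ∏ i, cpr μ (Yv i) (Wv i) (y i) (w i) with hr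
  have hmarg : ∀ i, condEnt μ (Yv i) (Wv i)
      = -∑ y, ∑ w, p y w * Real.log (cpr μ (Yv i) (Wv i) (y i) (w i)) := by
    intro i
    have h := sum_fiber μ (fun ω => (Y ω, W ω)) hZ (fun c => (c.1 i, c.2 i))
      (fun d => Real.log (cpr μ (Yv i) (Wv i) d.1 d.2))
    simp only [Fintype.sum_prod_type, Prod.mk.injEq] at h
    rw [condEnt, neg_inj]
    exact h
  -- Positivity on the support lets `log` split over the quotient and the product.
  have hcpos : ∀ y w, 0 < p y w → ∀ i, 0 < cpr μ (Yv i) (Wv i) (y i) (w i) := by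
    intro y w h i
    refine cpr_pos μ _ _ _ _ h ?_
    rintro ω ⟨rfl, rfl⟩
    exact ⟨rfl, rfl⟩
  have hS : stochInt μ Yv Wv = ∑ y, ∑ w, p y w * Real.log (cpr μ Y W y w / r y w) := by
    rw [stochInt, sum_congr rfl (fun i _ => hmarg i), condEnt, neg_neg, sum_neg_distrib,
      sum_comm (s := (univ : Finset (Fin M))), ← sub_eq_add_neg, ← sum_sub_distrib]
    refine sum_congr rfl fun y _ => ?_
    rw [sum_comm (s := (univ : Finset (Fin M))), ← sum_sub_distrib]
    refine sum_congr rfl fun w _ => ?_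
    rw [← mul_sum, ← mul_sub]
    change p y w * _ = _
    rcases (show 0 ≤ p y w from ENNReal.toReal_nonneg).eq_or_lt with h | h
    · simp [← h]
    · have hc := hcpos y w h
      rw [Real.log_div (cpr_pos μ Y W y w h subset_rfl).ne' (prod_pos fun i _ => hc i).ne',
        Real.log_prod (fun i _ => (hc i).ne')]
  constructor
  · rw [hS]
    set q : (∀ i, Wt i) → ℝ := fun w => (μ {ω | W ω = w}).toReal with hq
    have hlow : ∑ y, ∑ w, (p y w - q w * r y w)
        ≤ ∑ y, ∑ w, p y w * Real.log (cpr μ Y W y w / r y w) := by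
      refine sum_le_sum fun y _ => sum_le_sum fun w _ => ?_
      refine gibbs_term ENNReal.toReal_nonneg ENNReal.toReal_nonneg
        (prod_nonneg fun i _ => cpr_nonneg _ _ _ _ _) (fun h => ?_)
        (fun h => prod_pos fun i _ => hcpos y w h i)
      exact h.trans_le (ENNReal.toReal_mono (measure_ne_top _ _)
        (measure_mono fun ω h => h.2))
    refine le_trans ?_ hlow
    have hpq : ∑ y, ∑ w, p y w = ∑ w, q w := by
      have h := sum_fiber μ (fun ω => (Y ω, W ω)) hZ (fun c => c.2) (fun _ => 1)
      simp only [Fintype.sum_prod_type, Prod.mk.injEq, mul_one] at h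
      exact h.symm
    have hr1 : ∀ w, ∑ y, r y w ≤ 1 := by
      intro w
      have h := Fintype.prod_sum (fun i a => cpr μ (Yv i) (Wv i) a (w i))
      rw [← h]
      exact prod_le_one (fun i _ => sum_nonneg fun a _ => cpr_nonneg _ _ _ _ _)
        (fun i _ => sum_cpr_le_one μ _ _ (hYm i) (hWm i) _)
    have hqr : ∑ y, ∑ w, q w * r y w ≤ ∑ w, q w := by
      rw [sum_comm]
      refine sum_le_sum fun w _ => ?_
      rw [← mul_sum]
      exact mul_le_of_le_one_right ENNReal.toReal_nonneg (hr1 w)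
    simp only [sum_sub_distrib]
    linarith
  · rw [hS, condKL]
    refine sum_congr rfl fun y _ => sum_congr rfl fun w _ => ?_
    -- Histories of the empty parent set form a one-point type, so they impose no condition.
    have hc : ∀ i, cpr μ (Yv i)
        (fun ω => (Wv i ω, fun j : {j // j ∈ (∅ : Finset (Fin M))} => Wv j.1 ω))
        (y i) (w i, fun j : {j // j ∈ (∅ : Finset (Fin M))} => w j.1)
        = cpr μ (Yv i) (Wv i) (y i) (w i) := by
      intro i
      have hsub : ∀ ω, (fun j : {j // j ∈ (∅ : Finset (Fin M))} => Wv j.1 ω)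
          = fun j : {j // j ∈ (∅ : Finset (Fin M))} => w j.1 := fun ω => funext fun j => absurd j.2 (notMem_empty _)
      simp [cpr, Prod.ext_iff, hsub]
    simp only [hc, hr, hp, hYdef, hWdef]
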